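/- arXiv:math/0312232 — 2 statements merged into one kernel-verified Lean document; each statement's English description precedes it below -/
import Mathlib

section
/- Let 0 ≤ r1, r2 ≤ n and 0 ≤ s ≤ min(r1, n − r1, r2, n − r2). Then for all t ∈ ℂ: λ_s^{r1,r2}(t; n) = (1 / ([n−r1]_s [r2]_s)) · Σ_{j=0}^s (−1)^j binom(s, j) · [t]_j · [r2 − t]_{s−j} · [r1 − r2 + t]_j · [n − r1 − t]_{s−j}, where [z]_k = z(z−1)⋯(z−k+1) for z ∈ ℂ. -/
/-- Falling factorial `z(z-1)⋯(z-k+1)` for complex `z`. -/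
noncomputable def cfall (z : ℂ) (k : ℕ) : ℂ := ∏ i ∈ Finset.range k, (z - i)

/-- Generalized binomial coefficient `binom(t, j)` for complex `t`. -/
noncomputable def cbinom (t : ℂ) (j : ℕ) : ℂ := cfall t j / (Nat.factorial j)

/-- The Hahn kernel `λ_s^{r1,r2}(t; n)`. -/
noncomputable def hahn (n r1 r2 s : ℕ) (t : ℂ) : ℂ :=
  ∑ j ∈ Finset.range (s + 1),
    (-1 : ℂ) ^ j * cbinom t j * cfall (s : ℂ) j * cfall ((n : ℂ) - s + 1) j /
      (cfall ((n : ℂ) - r1) j * cfall (r2 : ℂ) j)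

/-!
Clear the denominators of the Hahn kernel and let `a = n - r1`, `b = r2`, `d = r1 - r2` be
arbitrary elements of a commutative ring. Both sides of the identity then satisfy
`F (s + 1) a b d t = (a - t) (b - t) F s (a - 1) (b - 1) d t
  - t (d + t) F s (a - 1) (b - 1) d (t - 1)`,
and both are `1` at `s = 0`. For the right-hand side the recurrence is Pascal's rule. For the
left-hand side Pascal's rule is applied together with the step from `a + b + d - s - 1` to
`a + b + d - s` in the falling factorial, and the recurrence becomes
`(a - j) (b - j) - (a + b + d - j) (t - j) = (a - t) (b - t) - (d + t) (t - j)`.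
-/

open Finset Polynomial

local notation:75 z:75 "^_" k:76 => eval z (descPochhammer _ k)

section CommRing

variable {R : Type*} [CommRing R]

lemma descPochhammer_succ_eval_left (z : R) (k : ℕ) : z^_(k + 1) = z * (z - 1)^_k := by
  simp [descPochhammer_succ_left]

lemma descPochhammer_eval_add (z : R) (j k : ℕ) : z^_(j + k) = z^_j * (z - j)^_k := by
  simp [← descPochhammer_mul]

lemma mul_descPochhammer_eval_sub_one (z : R) (k : ℕ) :
    z * (z - 1)^_k = z^_k * (z - k) := by
  rw [← descPochhammer_succ_eval_left, descPochhammer_succ_eval]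

lemma cast_choose_succ_right_mul (s j : ℕ) :
    (s.choose (j + 1) : R) * (j + 1) = s.choose j * (s - j) := by
  have h := congrArg (Nat.cast (R := R)) (Nat.add_one_mul_choose_eq s j)
  rw [Nat.choose_succ_succ] at h
  push_cast at h
  linear_combination -h

lemma choose_succ_mul_descPochhammer_eval_add_one (y : R) (s j : ℕ) :
    ((s + 1).choose (j + 1) : R) * (y + 1)^_(j + 1) =
      s.choose (j + 1) * y^_(j + 1) + s.choose j * y^_j * (y + s + 1 - j) := by
  rw [descPochhammer_succ_eval_left, add_sub_cancel_right, descPochhammer_succ_eval,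
    Nat.choose_succ_succ]
  push_cast
  linear_combination y^_j * cast_choose_succ_right_mul (R := R) s j

lemma sum_choose_succ_mul_descPochhammer_eval_add_one (y : R) (g : ℕ → R) (s : ℕ) :
    ∑ j ∈ range (s + 2), ((s + 1).choose j : R) * (y + 1)^_j * g j =
      ∑ j ∈ range (s + 1), (s.choose j : R) * y^_j * (g j + (y + s + 1 - j) * g (j + 1)) := by
  have extend : ∑ j ∈ range (s + 1), (s.choose j : R) * y^_j * g j =
      ∑ j ∈ range (s + 2), (s.choose j : R) * y^_j * g j := by
    simp [sum_range_succ _ (s + 1)]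
  simp only [mul_add, sum_add_distrib]
  rw [extend, sum_range_succ', sum_range_succ' _ (s + 1), add_right_comm, ← sum_add_distrib]
  simp only [choose_succ_mul_descPochhammer_eval_add_one, Nat.choose_zero_right,
    descPochhammer_zero, add_mul, mul_assoc, eval_one]

/-- The Hahn kernel multiplied by `[a]_s [b]_s`, where `a = n - r1`, `b = r2` and `d = r1 - r2`,
so that `a + b + d = n`. The quotients `[a]_s / [a]_j` are written as `[a - j]_{s - j}`, which
makes sense in any commutative ring. -/
noncomputable def hahnSum (s : ℕ) (a b d t : R) : R :=
  ∑ j ∈ range (s + 1), (-1) ^ j * s.choose j * t^_j * (a + b + d - s + 1)^_j *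
    (a - j)^_(s - j) * (b - j)^_(s - j)

/-- The alternating sum by which a Rodrigues formula (an `s`-th difference of a product of falling
factorials) expresses the Hahn kernel multiplied by `[a]_s [b]_s`, with `a`, `b`, `d` as in
`hahnSum`. -/
noncomputable def rodriguesSum (s : ℕ) (a b d t : R) : R :=
  ∑ j ∈ range (s + 1), (-1) ^ j * s.choose j * t^_j * (b - t)^_(s - j) *
    (d + t)^_j * (a - t)^_(s - j)

lemma rodriguesSum_succ (s : ℕ) (a b d t : R) :
    rodriguesSum (s + 1) a b d t = (a - t) * (b - t) * rodriguesSum s (a - 1) (b - 1) d t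
      - t * (d + t) * rodriguesSum s (a - 1) (b - 1) d (t - 1) := by
  let f (i k : ℕ) : R := (-1) ^ i * t^_i * (b - t)^_k * (d + t)^_i * (a - t)^_k
  have pascal : rodriguesSum (s + 1) a b d t =
      ∑ j ∈ range (s + 1), (s.choose j : R) * f j (s + 1 - j) +
        ∑ j ∈ range (s + 1), (s.choose j : R) * f (j + 1) (s - j) := by
    rw [← sum_choose_succ_mul]
    exact sum_congr rfl fun j _ ↦ by ring
  rw [pascal, rodriguesSum, rodriguesSum, mul_sum, mul_sum, sub_eq_add_neg, ← sum_neg_distrib]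
  congr 1 <;> refine sum_congr rfl fun j hj ↦ ?_
  · rw [Nat.sub_add_comm (mem_range_succ_iff.mp hj)]
    simp only [f, descPochhammer_succ_eval_left, sub_right_comm _ (1 : R) t]
    ring
  · simp only [f, descPochhammer_succ_eval_left, sub_sub_sub_cancel_right, ← add_sub_assoc]
    ring

lemma hahnSum_succ (s : ℕ) (a b d t : R) :
    hahnSum (s + 1) a b d t = (a - t) * (b - t) * hahnSum s (a - 1) (b - 1) d t
      - t * (d + t) * hahnSum s (a - 1) (b - 1) d (t - 1) := by
  let y : R := a - 1 + (b - 1) + d - s + 1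
  let g (j : ℕ) : R := (-1) ^ j * t^_j * (a - j)^_(s + 1 - j) * (b - j)^_(s + 1 - j)
  have pascal : hahnSum (s + 1) a b d t =
      ∑ j ∈ range (s + 1), (s.choose j : R) * y^_j * (g j + (y + s + 1 - j) * g (j + 1)) := by
    rw [← sum_choose_succ_mul_descPochhammer_eval_add_one]
    have hy : a + b + d - (s + 1 : ℕ) + 1 = y + 1 := by simp only [y]; push_cast; ring
    exact sum_congr rfl fun j _ ↦ by rw [hy]; ring
  rw [pascal, hahnSum, hahnSum, mul_sum, mul_sum, ← sum_sub_distrib]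
  refine sum_congr rfl fun j hj ↦ ?_
  simp only [g]
  rw [Nat.add_sub_add_right, Nat.sub_add_comm (mem_range_succ_iff.mp hj),
    descPochhammer_succ_eval_left (a - j), descPochhammer_succ_eval_left (b - j),
    descPochhammer_succ_eval, Nat.cast_succ, ← sub_sub, ← sub_sub, sub_right_comm a 1,
    sub_right_comm b 1]
  linear_combination (d + t) * (-1) ^ j * s.choose j * y^_j *
    (a - j - 1)^_(s - j) * (b - j - 1)^_(s - j) * mul_descPochhammer_eval_sub_one t j

theorem hahnSum_eq_rodriguesSum (s : ℕ) (a b d t : R) :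
    hahnSum s a b d t = rodriguesSum s a b d t := by
  induction s generalizing a b t with
  | zero => simp [hahnSum, rodriguesSum]
  | succ s ih => rw [hahnSum_succ, rodriguesSum_succ, ih, ih]

end CommRing

lemma hahnSum_div {K : Type*} [Field K] {s : ℕ} {a b : K} (ha : a^_s ≠ 0) (hb : b^_s ≠ 0)
    (d t : K) :
    hahnSum s a b d t / (a^_s * b^_s) =
      ∑ j ∈ range (s + 1), (-1) ^ j * s.choose j * t^_j * (a + b + d - s + 1)^_j /
        (a^_j * b^_j) := by
  rw [hahnSum, sum_div]
  refine sum_congr rfl fun j hj ↦ ?_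
  have split_at_j (z : K) : z^_s = z^_j * (z - j)^_(s - j) := by
    rw [← descPochhammer_eval_add, Nat.add_sub_cancel' (mem_range_succ_iff.mp hj)]
  rw [split_at_j, mul_ne_zero_iff] at ha hb
  obtain ⟨ha_j, ha_rest⟩ := ha
  obtain ⟨hb_j, hb_rest⟩ := hb
  rw [split_at_j a, split_at_j b]
  field_simp

lemma cfall_eq_descPochhammer_eval (z : ℂ) (k : ℕ) : cfall z k = z^_k :=
  (descPochhammer_eval_eq_prod_range k z).symm

lemma cfall_natCast_ne_zero {m s : ℕ} (h : s ≤ m) : cfall (m : ℂ) s ≠ 0 := by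
  rw [cfall_eq_descPochhammer_eval, descPochhammer_eval_eq_descFactorial, Nat.cast_ne_zero,
    Ne, Nat.descFactorial_eq_zero_iff_lt]
  exact h.not_gt

lemma cbinom_mul_cfall_natCast (t : ℂ) (s j : ℕ) :
    cbinom t j * cfall s j = s.choose j * cfall t j := by
  rw [cbinom, Nat.cast_choose_eq_descPochhammer_div, cfall_eq_descPochhammer_eval (s : ℂ)]
  ring

theorem stmt_17_general (n r1 r2 : ℂ) (s : ℕ)
    (h1 : cfall (n - r1) s ≠ 0) (h2 : cfall r2 s ≠ 0) (t : ℂ) :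
    ∑ j ∈ range (s + 1), (-1 : ℂ) ^ j * cbinom t j * cfall (s : ℂ) j * cfall (n - s + 1) j /
        (cfall (n - r1) j * cfall r2 j) =
      (1 / (cfall (n - r1) s * cfall r2 s)) *
        ∑ j ∈ range (s + 1),
          (-1 : ℂ) ^ j * (s.choose j : ℂ) * cfall t j * cfall (r2 - t) (s - j) *
            cfall (r1 - r2 + t) j * cfall (n - r1 - t) (s - j) := by
  have hn : n - r1 + r2 + (r1 - r2) = n := by ring
  simp only [mul_assoc _ (cbinom _ _), cbinom_mul_cfall_natCast, ← mul_assoc]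
  simp only [cfall_eq_descPochhammer_eval] at h1 h2 ⊢
  have key := hahnSum_div h1 h2 (r1 - r2) t
  rw [hahnSum_eq_rodriguesSum, hn] at key
  rw [← key, one_div_mul_eq_div, rodriguesSum]

/-- For `0 ≤ r1, r2 ≤ n`, `0 ≤ s ≤ min(r1, n-r1, r2, n-r2)` and all `t ∈ ℂ`,
`λ_s^{r1,r2}(t; n) = (1/([n-r1]_s [r2]_s)) Σ_{j=0}^s (-1)^j binom(s,j)
 [t]_j [r2-t]_{s-j} [r1-r2+t]_j [n-r1-t]_{s-j}`. -/
theorem stmt_17 (n r1 r2 s : ℕ) (h1 : r1 ≤ n) (h2 : r2 ≤ n)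
    (hs : s ≤ min (min r1 (n - r1)) (min r2 (n - r2))) (t : ℂ) :
    hahn n r1 r2 s t =
      (1 / (cfall ((n : ℂ) - r1) s * cfall (r2 : ℂ) s)) *
        ∑ j ∈ Finset.range (s + 1),
          (-1 : ℂ) ^ j * (s.choose j : ℂ) * cfall t j * cfall ((r2 : ℂ) - t) (s - j) *
            cfall ((r1 : ℂ) - r2 + t) j * cfall ((n : ℂ) - r1 - t) (s - j) := by
  have h1' : cfall ((n : ℂ) - r1) s ≠ 0 :=
    Nat.cast_sub (R := ℂ) h1 ▸ cfall_natCast_ne_zero (by lia)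
  exact stmt_17_general n r1 r2 s h1' (cfall_natCast_ne_zero (by lia)) t
end

section
/- Let Ω be a finite set with |Ω| = n, let 0 ≤ s ≤ n/2 and let r, r0 be integers with s ≤ r, r0 ≤ n − s. Then as linear maps (X_s → ℂ) → (X_s → ℂ): Λ̃_s^{r0,s} ∘ F^{r→r0} ∘ Λ̃_s^{s,r} = k_s^{r,r0} · Λ̃_s^{s,s}, where F^{r→r0} : (X_r → ℂ) → (X_{r0} → ℂ) is the Fourier block (F^{r→r0} ψ)(x) = Σ_{x' ∈ X_r} (−1)^{|x ∩ x'|} ψ(x'), and k_s^{r,r0} = (−2)^s · √(binom(n−2s, r0−s)/binom(n−2s, r−s)) · P_{r−s}(r0−s; n−2s). (This expresses that, in the decomposition of the representation space transported by the unitaries Λ̃_s^{s,r}, the Fourier transform F_X acts on the s-isotypic block with matrix entries k_s^{r,r0}.) -/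
/-- The operator `Λ_s^{r1,r2} : (X_{r1} → ℂ) → (X_{r2} → ℂ)` with kernel
`λ_s^{r1,r2}(|x2 \ x1|; n)`. -/
noncomputable def Lam (Ω : Type*) [Fintype Ω] [DecidableEq Ω] (n r1 r2 s : ℕ)
    (ψ : {x : Finset Ω // x.card = r1} → ℂ) : {x : Finset Ω // x.card = r2} → ℂ :=
  fun x2 => ∑ x1 : {x : Finset Ω // x.card = r1},
    hahn n r1 r2 s ((((x2 : Finset Ω) \ (x1 : Finset Ω)).card : ℕ) : ℂ) * ψ x1

/-- The Krawtchouk polynomial `P_m(k; N) = Σ_{j=0}^m (-1)^j binom(k,j) binom(N-k, m-j)`. -/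
noncomputable def kraw (m k N : ℕ) : ℂ :=
  ∑ j ∈ Finset.range (m + 1), (-1 : ℂ) ^ j * (k.choose j : ℂ) * ((N - k).choose (m - j) : ℂ)

/-- The normalization constant `α_s^{r1,r2}` of the unitary operators `Λ̃_s^{r1,r2}`. -/
noncomputable def alphaConst (n r1 r2 s : ℕ) : ℂ :=
  cfall ((n : ℂ) - r1) s * cfall (r2 : ℂ) s /
    ((Real.sqrt (((n - 2 * s).choose (r1 - s) : ℝ) * ((n - 2 * s).choose (r2 - s) : ℝ)) : ℂ) *
      (s.factorial : ℂ) * cfall ((n : ℂ) - s + 1) s)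

/-- The unitary normalization `Λ̃_s^{r1,r2} = α_s^{r1,r2} Λ_s^{r1,r2}`. -/
noncomputable def LamT (Ω : Type*) [Fintype Ω] [DecidableEq Ω] (n r1 r2 s : ℕ)
    (ψ : {x : Finset Ω // x.card = r1} → ℂ) : {x : Finset Ω // x.card = r2} → ℂ :=
  fun x2 => alphaConst n r1 r2 s * Lam Ω n r1 r2 s ψ x2

/-- The Fourier block `F^{r→r0} : (X_r → ℂ) → (X_{r0} → ℂ)`,
`(F^{r→r0} ψ)(x) = Σ_{x' ∈ X_r} (-1)^{|x ∩ x'|} ψ(x')`. -/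
noncomputable def Fblock (Ω : Type*) [Fintype Ω] [DecidableEq Ω] (r r0 : ℕ)
    (ψ : {x : Finset Ω // x.card = r} → ℂ) : {x : Finset Ω // x.card = r0} → ℂ :=
  fun x => ∑ x' : {x : Finset Ω // x.card = r},
    (-1 : ℂ) ^ (((x : Finset Ω) ∩ (x' : Finset Ω)).card) * ψ x'

/-- The coefficient `k_s^{r,r0}` of the Fourier transform in the unitary basis. -/
noncomputable def kCoef (n r r0 s : ℕ) : ℂ :=
  (-2 : ℂ) ^ s *
    (Real.sqrt (((n - 2 * s).choose (r0 - s) : ℝ) / ((n - 2 * s).choose (r - s) : ℝ)) : ℂ) *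
    kraw (r - s) (r0 - s) (n - 2 * s)

/-!
The function `f = Λ̃_s^{s,s} ψ` is harmonic: its sum over the `s`-sets containing a given smaller
set vanishes. Up to a scalar, `Λ̃_s^{s,r} ψ` is the lift of `f` to `X_r`, whose value at `x` is
the sum of `f` over the `s`-subsets of `x`.

By Newton's interpolation formula, pairing a harmonic `f` with a kernel `φ(|y ∩ x|)` gives the lift
of `f` at `x`, multiplied by the `s`-th finite difference of `φ` at `0`. For fixed `x₀`, summing the
Fourier kernel over the `r`-sets containing `y` depends only on `k = |y ∩ x₀|`, and equals
`(-1)^k P_{r-s}(|x₀| - k; n - s)`; the recurrence `P_m(k; N+1) + P_m(k+1; N+1) = 2 P_m(k; N)` makes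
its `s`-th difference `(-2)^s P_{r-s}(|x₀| - s; n - 2s)`. Hence the Fourier block multiplies lifts
of `f` by this scalar. Finally `Λ̃_s^{r₀,s}` sends the lift of `f` back to a multiple of `f`,
because only the top coefficient of its kernel survives.
-/

section SubsetSums

open Finset

variable {Ω M R : Type*} {r s : ℕ}

/-- The sum of `f` over the `s`-subsets of a set. Functions on `X_s` are represented by total
functions on `Finset Ω`, whose values at sets of other cardinalities do not matter; restricted
to `X_r`, `sumSubsets s f` is the lift of `f` from `X_s` to `X_r`. -/
def sumSubsets [AddCommMonoid M] (s : ℕ) (f : Finset Ω → M) (x : Finset Ω) : M :=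
  ∑ y ∈ powersetCard s x, f y

/-- The sum of `f` over the `s`-sets containing a given set: the transpose of `sumSubsets`. -/
def sumSupersets [AddCommMonoid M] [Fintype Ω] [DecidableEq Ω] (s : ℕ)
    (f : Finset Ω → M) (w : Finset Ω) : M :=
  ∑ y ∈ powersetCard s univ with w ⊆ y, f y

section AddCommMonoid

variable [AddCommMonoid M] (f : Finset Ω → M)

lemma sumSubsets_self {x : Finset Ω} (hx : #x = s) : sumSubsets s f x = f x := by
  subst hx
  rw [sumSubsets, powersetCard_self, sum_singleton]

lemma sumSubsets_eq_zero_of_card_lt {x : Finset Ω} (hx : #x < s) : sumSubsets s f x = 0 := by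
  rw [sumSubsets, powersetCard_eq_empty.mpr hx, sum_empty]

lemma sumSubsets_sumSubsets (hsr : s ≤ r) (x : Finset Ω) :
    sumSubsets r (sumSubsets s f) x = (#x - s).choose (r - s) • sumSubsets s f x := by
  classical
  simp only [sumSubsets]
  rw [sum_comm' (t' := powersetCard s x) (s' := fun y => {z ∈ powersetCard r x | y ⊆ z}), smul_sum]
  · refine sum_congr rfl fun y hy => ?_
    obtain ⟨hyx, rfl⟩ := mem_powersetCard.mp hy
    rw [sum_const, card_filter_powersetCard_subset y x r hyx hsr]
  · intro z y
    simp only [mem_filter, mem_powersetCard]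
    exact ⟨fun ⟨⟨hz, hzr⟩, hyz, hy⟩ => ⟨⟨⟨hz, hzr⟩, hyz⟩, hyz.trans hz, hy⟩,
      fun ⟨⟨⟨hz, hzr⟩, hyz⟩, _, hy⟩ => ⟨⟨hz, hzr⟩, hyz, hy⟩⟩

variable [Fintype Ω] [DecidableEq Ω]

lemma sumSupersets_self {w : Finset Ω} (hw : #w = s) : sumSupersets s f w = f w := by
  have above : {y ∈ powersetCard s (univ : Finset Ω) | w ⊆ y} = {w} := by
    ext y
    simp only [mem_filter, mem_powersetCard, subset_univ, true_and, mem_singleton]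
    exact ⟨fun ⟨hy, hwy⟩ => (eq_of_subset_of_card_le hwy (hy.trans hw.symm).le).symm,
      by rintro rfl; simp [hw]⟩
  rw [sumSupersets, above, sum_singleton]

lemma sum_sumSupersets_insert (w : Finset Ω) :
    ∑ ω ∈ wᶜ, sumSupersets s f (insert ω w) = (s - #w) • sumSupersets s f w := by
  simp only [sumSupersets]
  rw [sum_comm' (t' := {y ∈ powersetCard s univ | w ⊆ y}) (s' := fun y => y \ w), smul_sum]
  · refine sum_congr rfl fun y hy => ?_
    simp only [mem_filter, mem_powersetCard] at hy
    rw [sum_const, card_sdiff_of_subset hy.2, hy.1.2]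
  · intro ω y
    simp only [mem_compl, mem_filter, mem_powersetCard, insert_subset_iff, mem_sdiff]
    tauto

end AddCommMonoid

section Semiring

variable [Semiring R] [DecidableEq Ω]

lemma choose_card_inter_eq_sumSubsets (j : ℕ) (x y : Finset Ω) :
    ((#(y ∩ x)).choose j : R) = sumSubsets j (fun w => if w ⊆ x then 1 else 0) y := by
  have split : powersetCard j (y ∩ x) = {w ∈ powersetCard j y | w ⊆ x} := by
    ext w
    simp only [mem_powersetCard, mem_filter, subset_inter_iff]
    tauto
  rw [sumSubsets, sum_boole, ← split, card_powersetCard]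

lemma sumSubsets_choose_card_inter {j : ℕ} (hjs : j ≤ s) (x y : Finset Ω) :
    sumSubsets s (fun z => ((#(z ∩ y)).choose j : R)) x =
      (#x - j).choose (s - j) * (#(x ∩ y)).choose j := by
  simp only [choose_card_inter_eq_sumSubsets (R := R) j y]
  rw [sumSubsets_sumSubsets _ hjs, nsmul_eq_mul]

variable [Fintype Ω]

lemma sum_mul_sumSubsets (g f : Finset Ω → R) :
    ∑ x ∈ powersetCard r univ, g x * sumSubsets s f x =
      ∑ y ∈ powersetCard s univ, sumSupersets r g y * f y := by
  simp only [sumSubsets, sumSupersets, mul_sum, sum_mul]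
  refine sum_comm' fun x y => ?_
  simp only [mem_filter, mem_powersetCard, subset_univ, true_and]
  tauto

lemma sum_mul_choose_card_inter (f : Finset Ω → R) (j : ℕ) (x : Finset Ω) :
    ∑ y ∈ powersetCard s univ, f y * (#(y ∩ x)).choose j = sumSubsets j (sumSupersets s f) x := by
  have subsets_of_x : {w ∈ powersetCard j (univ : Finset Ω) | w ⊆ x} = powersetCard j x := by
    ext w
    simp only [mem_filter, mem_powersetCard, subset_univ, true_and, and_comm]
  simp only [choose_card_inter_eq_sumSubsets (R := R) j x]
  rw [sum_mul_sumSubsets, sumSubsets, ← subsets_of_x, sum_filter]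
  simp only [mul_ite, mul_one, mul_zero]

lemma sum_choose_card_sdiff_mul (g : Finset Ω → R) (j : ℕ) (y : Finset Ω) :
    ∑ x ∈ powersetCard r univ, (#(y \ x)).choose j * g x =
      ∑ z ∈ powersetCard j y, sumSubsets r g zᶜ := by
  simp only [← card_powersetCard, ← nsmul_eq_mul, ← sum_const, sumSubsets]
  refine sum_comm' fun x z => ?_
  simp only [mem_powersetCard, subset_univ, true_and, subset_sdiff, subset_compl_iff_disjoint_left]
  tauto

end Semiring

end SubsetSums

section Harmonic

open Finset fwdDiff

variable {Ω M R : Type*} [Fintype Ω] [DecidableEq Ω] {r s : ℕ}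

/-- A function on `s`-sets (given by a total function on `Finset Ω`) is harmonic if, for each set
`w` of `s - 1` points, its sum over the `s`-sets containing `w` vanishes. Over `ℂ` and for
`2 * s ≤ |Ω|` these functions form the irreducible constituent of the permutation representation
on `X_s` that does not occur in `X_{s-1}`. -/
def IsHarmonic [AddCommMonoid M] (s : ℕ) (f : Finset Ω → M) : Prop :=
  ∀ w : Finset Ω, #w + 1 = s → ∑ ω ∈ wᶜ, f (insert ω w) = 0

namespace IsHarmonic

lemma sumSupersets_eq_zero [AddCommMonoid M] [IsAddTorsionFree M] {f : Finset Ω → M}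
    (hf : IsHarmonic s f) {w : Finset Ω} (hw : #w < s) : sumSupersets s f w = 0 := by
  suffices vanish : ∀ d, ∀ w : Finset Ω, #w + 1 + d = s → sumSupersets s f w = 0 from
    vanish (s - (#w + 1)) w (by omega)
  intro d
  induction d with
  | zero =>
    intro w hw
    have double_count := sum_sumSupersets_insert (s := s) f w
    rw [show s - #w = 1 by omega, one_smul] at double_count
    rw [← double_count, ← hf w hw]
    refine sum_congr rfl fun ω hω => sumSupersets_self f ?_
    rw [card_insert_of_notMem (mem_compl.mp hω), ← hw]
  | succ d ih =>
    intro w hw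
    have double_count := sum_sumSupersets_insert (s := s) f w
    rw [sum_eq_zero fun ω hω => ih _ (by rw [card_insert_of_notMem (mem_compl.mp hω)]; omega),
      eq_comm, nsmul_eq_zero_iff] at double_count
    exact double_count.resolve_right (by omega)

variable [CommRing R] {f : Finset Ω → R}

lemma sum_mul {ι : Type*} (t : Finset ι) {f : ι → Finset Ω → R} (hf : ∀ i, IsHarmonic s (f i))
    (c : ι → R) : IsHarmonic s (fun x => ∑ i ∈ t, f i x * c i) := by
  intro w hw
  rw [sum_comm]
  exact sum_eq_zero fun i _ => by rw [← Finset.sum_mul, hf i w hw, zero_mul]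

lemma const_mul (hf : IsHarmonic s f) (c : R) : IsHarmonic s (fun x => c * f x) :=
  fun w hw => by rw [← mul_sum, hf w hw, mul_zero]

variable [NoZeroDivisors R] [CharZero R]

/-- Newton's formula expands `φ` in binomial coefficients; harmonicity kills all terms but the
`s`-th one. -/
lemma sum_mul_card_inter (hf : IsHarmonic s f) (φ : ℕ → R) (x : Finset Ω) :
    ∑ y ∈ powersetCard s univ, f y * φ #(y ∩ x) = (Δ_[1])^[s] φ 0 * sumSubsets s f x := by
  have newton {k : ℕ} (hk : k ≤ s) :
      φ k = ∑ j ∈ range (s + 1), (Δ_[1])^[j] φ 0 * (k.choose j : R) := by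
    have expansion := shift_eq_sum_fwdDiff_iter (1 : ℕ) φ k 0
    simp only [zero_add, smul_eq_mul, mul_one, nsmul_eq_mul'] at expansion
    rw [expansion]
    refine sum_subset (range_mono (by omega)) fun j _ hj => ?_
    rw [Nat.choose_eq_zero_of_lt (by simpa using hj), Nat.cast_zero, mul_zero]
  have low {j : ℕ} (hj : j < s) : sumSubsets j (sumSupersets s f) x = 0 :=
    sum_eq_zero fun w hw => hf.sumSupersets_eq_zero ((mem_powersetCard.mp hw).2.trans_lt hj)
  have top : sumSubsets s (sumSupersets s f) x = sumSubsets s f x :=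
    sum_congr rfl fun w hw => sumSupersets_self f (mem_powersetCard.mp hw).2
  calc
    _ = ∑ y ∈ powersetCard s univ, ∑ j ∈ range (s + 1),
          (Δ_[1])^[j] φ 0 * (f y * ((#(y ∩ x)).choose j : R)) := by
      refine sum_congr rfl fun y hy => ?_
      rw [newton ((card_le_card inter_subset_left).trans_eq (mem_powersetCard.mp hy).2), mul_sum]
      exact sum_congr rfl fun j _ => mul_left_comm _ _ _
    _ = ∑ j ∈ range (s + 1), (Δ_[1])^[j] φ 0 * sumSubsets j (sumSupersets s f) x := by
      rw [sum_comm]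
      simp only [← mul_sum, sum_mul_choose_card_inter]
    _ = (Δ_[1])^[s] φ 0 * sumSubsets s f x := by
      rw [sum_range_succ, top, sum_eq_zero, zero_add]
      exact fun j hj => by rw [low (mem_range.mp hj), mul_zero]

lemma sumSubsets_compl (hf : IsHarmonic s f) (x : Finset Ω) :
    sumSubsets s f xᶜ = (-1) ^ s * sumSubsets s f x := by
  have disjoint_sets :
      powersetCard s xᶜ = {y ∈ powersetCard s (univ : Finset Ω) | #(y ∩ x) = 0} := by
    ext y
    simp only [mem_powersetCard, mem_filter, subset_univ, true_and, card_eq_zero,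
      ← disjoint_iff_inter_eq_empty, subset_compl_iff_disjoint_right, and_comm]
  have diff : (Δ_[1])^[s] (fun k => if k = 0 then (1 : R) else 0) 0 = (-1) ^ s := by
    simp [fwdDiff_iter_eq_sum_shift]
  rw [← diff, ← hf.sum_mul_card_inter, sumSubsets, disjoint_sets, sum_filter]
  simp only [mul_ite, mul_one, mul_zero]

lemma sum_choose_card_sdiff_mul_sumSubsets (hf : IsHarmonic s f) (hsr : s ≤ r) (j : ℕ)
    (y : Finset Ω) :
    ∑ x ∈ powersetCard r univ, (#(y \ x)).choose j * sumSubsets s f x =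
      (-1) ^ s * (Fintype.card Ω - j - s).choose (r - s) * sumSubsets j (sumSubsets s f) y := by
  rw [sum_choose_card_sdiff_mul, sumSubsets, mul_sum]
  refine sum_congr rfl fun z hz => ?_
  rw [sumSubsets_sumSubsets f hsr, hf.sumSubsets_compl, card_compl, (mem_powersetCard.mp hz).2,
    nsmul_eq_mul]
  ring

end IsHarmonic

lemma isHarmonic_of_card_sdiff [CommRing R] {y : Finset Ω} (hy : #y = s) {κ : ℕ → R}
    (hκ : ∀ t < s, ((t + 1 : ℕ) : R) * κ t + (Fintype.card Ω - s - t : R) * κ (t + 1) = 0) :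
    IsHarmonic s (fun x => κ #(x \ y)) := by
  intro w hw
  have inside : ∀ ω ∈ y \ w, κ #(insert ω w \ y) = κ #(w \ y) := fun ω hω => by
    rw [insert_sdiff_of_mem _ (mem_sdiff.mp hω).1]
  have outside : ∀ ω ∈ (w ∪ y)ᶜ, κ #(insert ω w \ y) = κ (#(w \ y) + 1) := fun ω hω => by
    simp only [mem_compl, mem_union, not_or] at hω
    rw [insert_sdiff_of_notMem _ hω.2, card_insert_of_notMem (by simp [hω.1])]
  have split : wᶜ = (y \ w) ∪ (w ∪ y)ᶜ := by
    ext ω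
    simp only [mem_compl, mem_union, mem_sdiff]
    tauto
  have disj : Disjoint (y \ w) (w ∪ y)ᶜ :=
    disjoint_compl_right.mono_left (sdiff_subset.trans subset_union_right)
  have card_inside : #(y \ w) = #(w \ y) + 1 := by
    have := card_sdiff_add_card w y
    have := card_sdiff_add_card y w
    rw [union_comm] at this
    omega
  have card_outside : (#(w ∪ y)ᶜ : R) = Fintype.card Ω - s - #(w \ y) := by
    rw [card_compl, ← card_sdiff_add_card, Nat.cast_sub, Nat.cast_add, hy]
    · ring
    · rw [card_sdiff_add_card]
      exact card_le_univ _
  have hlt : #(w \ y) < s := (card_le_card sdiff_subset).trans_lt (by omega)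
  rw [split, sum_union disj, sum_congr rfl inside, sum_congr rfl outside, sum_const, sum_const,
    nsmul_eq_mul, nsmul_eq_mul, card_inside, card_outside]
  exact hκ _ hlt

end Harmonic

section Krawtchouk

open Finset Polynomial fwdDiff

lemma coeff_one_sub_X_pow {R : Type*} [CommRing R] (k i : ℕ) :
    ((1 - X : R[X]) ^ k).coeff i = (-1) ^ i * (k.choose i : R) := by
  have comp_neg : (1 - X : R[X]) ^ k = ((1 + X) ^ k : R[X]).comp (C (-1) * X) := by
    simp [sub_eq_add_neg]
  rw [comp_neg, comp_C_mul_X_coeff, coeff_one_add_X_pow, mul_comm]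

lemma kraw_eq_coeff (m k N : ℕ) :
    kraw m k N = ((1 - X : ℂ[X]) ^ k * (1 + X) ^ (N - k)).coeff m := by
  rw [coeff_mul, Finset.Nat.sum_antidiagonal_eq_sum_range_succ_mk, kraw]
  exact sum_congr rfl fun j _ => by rw [coeff_one_sub_X_pow, coeff_one_add_X_pow]

/-- The generating functions of the two summands differ in one factor, `1 + X` or `1 - X`. -/
lemma kraw_add_kraw_succ (m : ℕ) {k N : ℕ} (hk : k ≤ N) :
    kraw m k (N + 1) + kraw m (k + 1) (N + 1) = 2 * kraw m k N := by
  rw [kraw_eq_coeff, kraw_eq_coeff, kraw_eq_coeff, ← coeff_add, Nat.sub_add_comm hk,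
    Nat.add_sub_add_right, ← coeff_C_mul, C_ofNat]
  congr 1
  ring

lemma fwdDiff_iter_kraw (m : ℕ) {c k s N : ℕ} (hk : k + s ≤ c) (hc : c ≤ N + k) :
    (Δ_[1])^[s] (fun i => (-1) ^ i * kraw m (c - i) N) k =
      (-2) ^ s * ((-1) ^ k * kraw m (c - k - s) (N - s)) := by
  induction s generalizing k with
  | zero => simp
  | succ s ih =>
    obtain ⟨a, ha⟩ : ∃ a, c = k + (a + 1) + s := ⟨c - k - s - 1, by omega⟩
    obtain ⟨M, hM⟩ : ∃ M, N = M + 1 + s := ⟨N - s - 1, by omega⟩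
    have recurrence := kraw_add_kraw_succ m (k := a) (N := M) (by omega)
    rw [Function.iterate_succ_apply', fwdDiff, ih (by omega) (by omega), ih (by omega) hc,
      show c - (k + 1) - s = a by omega, show c - k - s = a + 1 by omega,
      show c - k - (s + 1) = a by omega, show N - s = M + 1 by omega,
      show N - (s + 1) = M by omega, pow_succ, pow_succ]
    linear_combination (-(-2) ^ s * (-1) ^ k) * recurrence

variable {Ω : Type*} [DecidableEq Ω]

lemma sum_powersetCard_neg_one_pow_card_inter (m : ℕ) (A B : Finset Ω) :
    ∑ z ∈ powersetCard m A, (-1 : ℂ) ^ #(z ∩ B) = kraw m #(A ∩ B) #A := by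
  let ε : Ω → ℂ := fun i => if i ∈ B then -1 else 1
  have prod_ε (z : Finset Ω) : ∏ i ∈ z, ε i = (-1) ^ #(z ∩ B) := by
    simp [ε]
  have factor (i : Ω) : 1 + C (ε i) * X = if i ∈ B then 1 - X else 1 + X := by
    by_cases hi : i ∈ B <;> simp [ε, hi, sub_eq_add_neg]
  have expand : ∏ i ∈ A, (1 + C (ε i) * X) =
      ∑ z ∈ A.powerset, C ((-1 : ℂ) ^ #(z ∩ B)) * X ^ #z := by
    rw [prod_one_add]
    exact sum_congr rfl fun z _ => by
      rw [prod_mul_distrib, ← map_prod, prod_ε, prod_const]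
  have collect : ∏ i ∈ A, (1 + C (ε i) * X) = (1 - X) ^ #(A ∩ B) * (1 + X) ^ (#A - #(A ∩ B)) := by
    rw [prod_congr rfl fun i _ => factor i, prod_ite, prod_const, prod_const,
      filter_mem_eq_inter, filter_notMem_eq_sdiff, card_sdiff, inter_comm B]
  rw [kraw_eq_coeff, ← collect, expand, finsetSum_coeff, powersetCard_eq_filter, sum_filter]
  simp only [coeff_C_mul, coeff_X_pow, mul_ite, mul_one, mul_zero, eq_comm]

variable [Fintype Ω] {r s : ℕ}

lemma sumSupersets_neg_one_pow_card_inter (x₀ : Finset Ω) {y : Finset Ω} (hy : #y ≤ r) :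
    sumSupersets r (fun x => (-1 : ℂ) ^ #(x₀ ∩ x)) y =
      (-1) ^ #(y ∩ x₀) * kraw (r - #y) (#x₀ - #(y ∩ x₀)) (Fintype.card Ω - #y) := by
  have disj {z : Finset Ω} (hz : z ∈ powersetCard (r - #y) yᶜ) : Disjoint z y :=
    subset_compl_iff_disjoint_right.mp (mem_powersetCard.mp hz).1
  rw [sumSupersets, filter_powersetCard_subset y univ r (subset_univ y) hy, ← compl_eq_univ_sdiff,
    sum_image fun z hz z' hz' h => by
      rw [← union_sdiff_cancel_right (disj hz), ← union_sdiff_cancel_right (disj hz')]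
      exact congrArg (· \ y) h]
  have sign : ∀ z ∈ powersetCard (r - #y) yᶜ,
      (-1 : ℂ) ^ #(x₀ ∩ (z ∪ y)) = (-1) ^ #(y ∩ x₀) * (-1) ^ #(z ∩ x₀) := fun z hz => by
    rw [← pow_add, inter_comm, union_inter_distrib_right, add_comm, card_union_of_disjoint]
    exact (disj hz).mono inter_subset_left inter_subset_left
  rw [sum_congr rfl sign, ← mul_sum, sum_powersetCard_neg_one_pow_card_inter, card_compl,
    inter_comm yᶜ, ← sdiff_eq_inter_compl, card_sdiff]

lemma IsHarmonic.sum_neg_one_pow_mul_sumSubsets {f : Finset Ω → ℂ} (hf : IsHarmonic s f)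
    (hsr : s ≤ r) {x₀ : Finset Ω} (hsx₀ : s ≤ #x₀) (hx₀ : #x₀ ≤ Fintype.card Ω - s) :
    ∑ x ∈ powersetCard r univ, (-1 : ℂ) ^ #(x₀ ∩ x) * sumSubsets s f x =
      (-2) ^ s * kraw (r - s) (#x₀ - s) (Fintype.card Ω - 2 * s) * sumSubsets s f x₀ := by
  have difference := fwdDiff_iter_kraw (r - s) (k := 0) (c := #x₀) (s := s)
    (N := Fintype.card Ω - s) (by omega) (by omega)
  rw [pow_zero, one_mul, tsub_zero, Nat.sub_sub, ← two_mul] at difference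
  rw [sum_mul_sumSubsets, ← difference, ← hf.sum_mul_card_inter]
  refine sum_congr rfl fun y hy => ?_
  obtain ⟨-, rfl⟩ := mem_powersetCard.mp hy
  rw [sumSupersets_neg_one_pow_card_inter x₀ hsr, mul_comm]

end Krawtchouk

section HahnCoefficients

open Finset

lemma cfall_natCast (a k : ℕ) : cfall a k = a.descFactorial k := by
  rw [cfall, ← descPochhammer_eval_eq_prod_range, descPochhammer_eval_eq_descFactorial]

lemma cfall_natCast_ne_zero_s19 {a k : ℕ} (hk : k ≤ a) : cfall a k ≠ 0 := by
  rw [cfall_natCast, Nat.cast_ne_zero, Ne, Nat.descFactorial_eq_zero_iff_lt]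
  omega

lemma cfall_natCast_self (a : ℕ) : cfall a a = a.factorial := by
  rw [cfall_natCast, Nat.descFactorial_self]

lemma cfall_natCast_eq_factorial_mul_choose (a k : ℕ) :
    cfall a k = k.factorial * a.choose k := by
  rw [cfall_natCast, Nat.descFactorial_eq_factorial_mul_choose, Nat.cast_mul]

lemma cfall_natCast_sub_ne_zero {a b k : ℕ} (hk : b + k ≤ a) : cfall ((a : ℂ) - b) k ≠ 0 := by
  rw [← Nat.cast_sub (by omega)]
  exact cfall_natCast_ne_zero_s19 (by omega)

lemma cfall_natCast_sub_add_one_ne_zero {a b k : ℕ} (hk : b + k ≤ a) :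
    cfall ((a : ℂ) - b + 1) k ≠ 0 := by
  rw [← Nat.cast_sub (by omega), ← Nat.cast_succ]
  exact cfall_natCast_ne_zero_s19 (by omega)

lemma cfall_add_one_mul (z : ℂ) (k : ℕ) :
    cfall (z + 1) k * (z + 1 - k) = (z + 1) * cfall z k := by
  rw [cfall, ← prod_range_succ (fun i : ℕ => z + 1 - i), prod_range_succ', cfall, mul_comm]
  simp

lemma cfall_mul_choose {j s r : ℕ} (hjs : j ≤ s) :
    cfall r j * (r - j).choose (s - j) = r.choose s * cfall s j := by
  simp only [cfall_natCast_eq_factorial_mul_choose]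
  have trinomial : (r.choose s * s.choose j : ℂ) = r.choose j * (r - j).choose (s - j) := by
    exact_mod_cast Nat.choose_mul hjs
  linear_combination -(j.factorial : ℂ) * trinomial

lemma cbinom_natCast (a k : ℕ) : cbinom a k = a.choose k := by
  rw [cbinom, cfall_natCast_eq_factorial_mul_choose,
    mul_div_cancel_left₀ _ (Nat.cast_ne_zero.mpr k.factorial_ne_zero)]

/-- The coefficient of `binom(t, j)` in the Hahn kernel `λ_s^{r1,r2}(t; n)`. -/
noncomputable def hahnCoeff (n r1 r2 s j : ℕ) : ℂ :=
  (-1) ^ j * cfall s j * cfall ((n : ℂ) - s + 1) j / (cfall ((n : ℂ) - r1) j * cfall r2 j)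

lemma hahn_natCast (n r1 r2 s t : ℕ) :
    hahn n r1 r2 s t = ∑ j ∈ range (s + 1), hahnCoeff n r1 r2 s j * t.choose j := by
  refine sum_congr rfl fun j _ => ?_
  rw [cbinom_natCast, hahnCoeff]
  ring

lemma hahnCoeff_mul_choose (n : ℕ) {j s r : ℕ} (hjs : j ≤ s) (hsr : s ≤ r) :
    hahnCoeff n s s s j * (r - j).choose (s - j) = r.choose s * hahnCoeff n s r s j := by
  have hs := cfall_natCast_ne_zero_s19 hjs
  have hr := cfall_natCast_ne_zero_s19 (hjs.trans hsr)
  have ratio : ((r - j).choose (s - j) : ℂ) = r.choose s * cfall s j / cfall r j := by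
    rw [eq_div_iff hr, mul_comm, cfall_mul_choose hjs]
  rw [hahnCoeff, hahnCoeff, ratio, mul_comm (cfall _ _) (cfall s j), mul_comm _ (cfall r j)]
  field_simp

lemma hahnCoeff_self_mul {n s j : ℕ} (hs : 2 * s ≤ n) (hj : j ≤ s) :
    hahnCoeff n s s s j * ((n : ℂ) - s + 1 - j) = (-1) ^ j * ((n : ℂ) - s + 1) := by
  have hsj := cfall_natCast_ne_zero_s19 hj
  have hnj : cfall ((n : ℂ) - s) j ≠ 0 := cfall_natCast_sub_ne_zero (by omega)
  rw [hahnCoeff]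
  field_simp
  exact cfall_add_one_mul _ _

lemma sum_neg_one_pow_mul_choose {t s : ℕ} (hts : t < s) :
    ∑ j ∈ range (s + 1), (-1 : ℂ) ^ j * (t + 1).choose j = 0 := by
  have partial_sum := Int.alternating_sum_range_choose_eq_choose (n := t) (m := s)
  rw [Nat.choose_eq_zero_of_lt hts, Nat.cast_zero, mul_zero] at partial_sum
  exact_mod_cast partial_sum

/-- Multiplying out with `hahnCoeff_self_mul` turns the left-hand side into a multiple of the
alternating sum of the binomial coefficients of `t + 1`. -/
lemma hahn_self_recurrence {n s t : ℕ} (hs : 2 * s ≤ n) (hts : t < s) :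
    ((t + 1 : ℕ) : ℂ) * hahn n s s s t + ((n : ℂ) - s - t) * hahn n s s s (t + 1 : ℕ) = 0 := by
  rw [hahn_natCast, hahn_natCast, mul_sum, mul_sum, ← sum_add_distrib,
    ← mul_zero ((n : ℂ) - s + 1), ← sum_neg_one_pow_mul_choose hts, mul_sum]
  refine sum_congr rfl fun j hj => ?_
  have coeff := hahnCoeff_self_mul hs (mem_range_succ_iff.mp hj)
  have absorb : ((t + 1 : ℕ) : ℂ) * t.choose j = ((t + 1 : ℕ) - j) * (t + 1).choose j := by
    rcases le_or_gt j (t + 1) with h | h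
    · rw [← Nat.cast_sub h]
      exact_mod_cast (by linarith [Nat.choose_mul_succ_eq t j])
    · rw [Nat.choose_eq_zero_of_lt h, Nat.choose_eq_zero_of_lt (by omega)]
      simp
  push_cast at absorb ⊢
  linear_combination hahnCoeff n s s s j * absorb + ((t + 1).choose j : ℂ) * coeff

end HahnCoefficients

section HahnFunctions

open Finset

variable {Ω : Type*} [DecidableEq Ω] {r s : ℕ}

lemma sumSubsets_hahn (n : ℕ) (y : Finset Ω) {x : Finset Ω} (hsx : s ≤ #x) :
    sumSubsets s (fun z => hahn n s s s #(z \ y)) x =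
      (#x).choose s * hahn n s #x s #(x \ y) := by
  have inter : ∀ z ∈ powersetCard s x, z \ y = z ∩ (x \ y) := fun z hz => by
    rw [← inter_sdiff_assoc, inter_eq_left.mpr (mem_powersetCard.mp hz).1]
  rw [sumSubsets, sum_congr rfl fun z hz => by rw [inter z hz]]
  simp only [hahn_natCast]
  rw [sum_comm, mul_sum]
  refine sum_congr rfl fun j hj => ?_
  have hjs : j ≤ s := mem_range_succ_iff.mp hj
  rw [← mul_sum, ← sumSubsets, sumSubsets_choose_card_inter hjs,
    inter_eq_right.mpr sdiff_subset, ← mul_assoc,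
    hahnCoeff_mul_choose n hjs hsx, mul_assoc]

variable [Fintype Ω]

lemma isHarmonic_hahn (hs : 2 * s ≤ Fintype.card Ω) {y : Finset Ω} (hy : #y = s) :
    IsHarmonic s (fun x => hahn (Fintype.card Ω) s s s #(x \ y)) :=
  isHarmonic_of_card_sdiff hy fun _ ht => hahn_self_recurrence hs ht

/-- Only the top coefficient of the Hahn kernel contributes, since lower ones meet sums over the
`s`-subsets of sets with fewer than `s` points. -/
lemma IsHarmonic.sum_hahn_mul_sumSubsets {f : Finset Ω → ℂ} (hf : IsHarmonic s f) (hsr : s ≤ r)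
    (n : ℕ) {y : Finset Ω} (hy : #y = s) :
    ∑ x ∈ powersetCard r univ, hahn n r s s #(y \ x) * sumSubsets s f x =
      hahnCoeff n r s s s * ((-1) ^ s * (Fintype.card Ω - 2 * s).choose (r - s) * f y) := by
  have low {j : ℕ} (hj : j < s) : sumSubsets j (sumSubsets s f) y = 0 :=
    sum_eq_zero fun z hz =>
      sumSubsets_eq_zero_of_card_lt f ((mem_powersetCard.mp hz).2.trans_lt hj)
  have top : sumSubsets s (sumSubsets s f) y = f y := by
    rw [sumSubsets_self _ hy, sumSubsets_self _ hy]
  simp only [hahn_natCast, Finset.sum_mul, mul_assoc]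
  rw [sum_comm]
  simp only [← mul_sum, hf.sum_choose_card_sdiff_mul_sumSubsets hsr]
  rw [sum_range_succ, top, Nat.sub_sub, ← two_mul, sum_eq_zero, zero_add, ← mul_assoc ((-1) ^ s)]
  exact fun j hj => by rw [low (mem_range.mp hj), mul_zero, mul_zero]

end HahnFunctions

section Operators

open Finset

lemma alphaConst_lift (n s r : ℕ) :
    alphaConst n s r s =
      alphaConst n s s s * r.choose s * (√((n - 2 * s).choose (r - s)) : ℂ)⁻¹ := by
  simp only [alphaConst, cfall_natCast_eq_factorial_mul_choose, Nat.choose_self, Nat.sub_self,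
    Nat.choose_zero_right, Nat.cast_one, one_mul, mul_one, Real.sqrt_one, Complex.ofReal_one]
  ring

/-- The parenthesized factor is the one produced by `IsHarmonic.sum_hahn_mul_sumSubsets`. -/
lemma alphaConst_mul_hahnCoeff {n s r : ℕ} (hsr : s ≤ r) (hrn : r + s ≤ n) :
    alphaConst n r s s * (hahnCoeff n r s s s * ((-1) ^ s * (n - 2 * s).choose (r - s))) =
      √((n - 2 * s).choose (r - s)) := by
  have hn : cfall ((n : ℂ) - r) s ≠ 0 := cfall_natCast_sub_ne_zero hrn
  have hn' : cfall ((n : ℂ) - s + 1) s ≠ 0 := cfall_natCast_sub_add_one_ne_zero (by omega)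
  have hfact : (s.factorial : ℂ) ≠ 0 := Nat.cast_ne_zero.mpr s.factorial_ne_zero
  have hsign : (-1 : ℂ) ^ s * (-1) ^ s = 1 := by rw [← mul_pow]; norm_num
  have hroot : (√((n - 2 * s).choose (r - s)) : ℂ) ≠ 0 :=
    Complex.ofReal_ne_zero.mpr
      (Real.sqrt_ne_zero'.mpr (Nat.cast_pos.mpr (Nat.choose_pos (by omega))))
  have hroot_sq : (√((n - 2 * s).choose (r - s)) : ℂ) ^ 2 = (n - 2 * s).choose (r - s) := by
    exact_mod_cast Real.sq_sqrt (Nat.cast_nonneg ((n - 2 * s).choose (r - s)))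
  rw [alphaConst, hahnCoeff, cfall_natCast_self, Nat.sub_self, Nat.choose_zero_right,
    Nat.cast_one, mul_one, ← hroot_sq]
  field_simp
  linear_combination hsign

lemma kCoef_eq (n r r0 s : ℕ) :
    kCoef n r r0 s = (√((n - 2 * s).choose (r - s)) : ℂ)⁻¹ *
      ((-2) ^ s * kraw (r - s) (r0 - s) (n - 2 * s)) * √((n - 2 * s).choose (r0 - s)) := by
  rw [kCoef, Real.sqrt_div (Nat.cast_nonneg _), Complex.ofReal_div]
  ring

variable {Ω : Type*} [Fintype Ω] {r r0 s : ℕ}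

lemma sum_subtype_card_eq {M : Type*} [AddCommMonoid M] (r : ℕ) (g : Finset Ω → M) :
    ∑ x : {x : Finset Ω // #x = r}, g x = ∑ x ∈ powersetCard r univ, g x :=
  (sum_subtype _ (fun _ => by simp [mem_powersetCard]) g).symm

variable [DecidableEq Ω]

lemma LamT_smul (n r1 r2 s : ℕ) (c : ℂ) (ψ : {x : Finset Ω // #x = r1} → ℂ) :
    LamT Ω n r1 r2 s (c • ψ) = c • LamT Ω n r1 r2 s ψ := by
  ext x
  simp only [LamT, Lam, Pi.smul_apply, smul_eq_mul, mul_sum]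
  exact sum_congr rfl fun y _ => by ring

lemma Fblock_smul (r r0 : ℕ) (c : ℂ) (ψ : {x : Finset Ω // #x = r} → ℂ) :
    Fblock Ω r r0 (c • ψ) = c • Fblock Ω r r0 ψ := by
  ext x
  simp only [Fblock, Pi.smul_apply, smul_eq_mul, mul_sum]
  exact sum_congr rfl fun y _ => by ring

/-- The function `Λ̃_s^{s,s} ψ` on `X_s`, with `n = |Ω|`, extended to all of `Finset Ω` by the same
kernel formula, so that `IsHarmonic` and `sumSubsets` apply to it. -/
noncomputable def harmonicPart (ψ : {x : Finset Ω // #x = s} → ℂ) (x : Finset Ω) : ℂ :=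
  alphaConst (Fintype.card Ω) s s s *
    ∑ y : {y : Finset Ω // #y = s}, hahn (Fintype.card Ω) s s s #(x \ y) * ψ y

lemma LamT_self (ψ : {x : Finset Ω // #x = s} → ℂ) :
    LamT Ω (Fintype.card Ω) s s s ψ = fun x : {x : Finset Ω // #x = s} => harmonicPart ψ x := rfl

lemma isHarmonic_harmonicPart (hs : 2 * s ≤ Fintype.card Ω) (ψ : {x : Finset Ω // #x = s} → ℂ) :
    IsHarmonic s (harmonicPart ψ) :=
  (IsHarmonic.sum_mul univ (fun y => isHarmonic_hahn hs y.2) ψ).const_mul _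

lemma LamT_eq_smul_sumSubsets (hsr : s ≤ r) (ψ : {x : Finset Ω // #x = s} → ℂ) :
    LamT Ω (Fintype.card Ω) s r s ψ =
      (√((Fintype.card Ω - 2 * s).choose (r - s)) : ℂ)⁻¹ •
        fun x : {x : Finset Ω // #x = r} => sumSubsets s (harmonicPart ψ) x := by
  ext ⟨x, rfl⟩
  have lift : sumSubsets s (harmonicPart ψ) x = alphaConst (Fintype.card Ω) s s s *
      ((#x).choose s * Lam Ω (Fintype.card Ω) s #x s ψ ⟨x, rfl⟩) := by
    simp only [sumSubsets, harmonicPart, Lam, ← mul_sum]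
    congr 1
    rw [sum_comm, mul_sum]
    refine sum_congr rfl fun y _ => ?_
    rw [← sum_mul, ← mul_assoc, ← sumSubsets_hahn _ _ hsr, sumSubsets]
  rw [LamT, alphaConst_lift, Pi.smul_apply, lift, smul_eq_mul]
  ring

namespace IsHarmonic

variable {f : Finset Ω → ℂ}

lemma Fblock_sumSubsets (hf : IsHarmonic s f) (hsr : s ≤ r) (hsr0 : s ≤ r0)
    (hr0 : r0 ≤ Fintype.card Ω - s) :
    Fblock Ω r r0 (fun x => sumSubsets s f x) =
      ((-2) ^ s * kraw (r - s) (r0 - s) (Fintype.card Ω - 2 * s)) •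
        fun x : {x : Finset Ω // #x = r0} => sumSubsets s f x := by
  ext ⟨x₀, rfl⟩
  exact (sum_subtype_card_eq r fun x => (-1) ^ #(x₀ ∩ x) * sumSubsets s f x).trans
    (hf.sum_neg_one_pow_mul_sumSubsets hsr hsr0 hr0)

lemma LamT_sumSubsets (hf : IsHarmonic s f) (hsr : s ≤ r) (hr : r + s ≤ Fintype.card Ω) :
    LamT Ω (Fintype.card Ω) r s s (fun x => sumSubsets s f x) =
      (√((Fintype.card Ω - 2 * s).choose (r - s)) : ℂ) •
        fun y : {y : Finset Ω // #y = s} => f y := by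
  ext ⟨y, hy⟩
  have pairing : Lam Ω (Fintype.card Ω) r s s (fun x => sumSubsets s f x) ⟨y, hy⟩ = _ :=
    (sum_subtype_card_eq r fun x => hahn (Fintype.card Ω) r s s #(y \ x) * sumSubsets s f x).trans
      (hf.sum_hahn_mul_sumSubsets hsr _ hy)
  rw [LamT, pairing, Pi.smul_apply, smul_eq_mul, ← alphaConst_mul_hahnCoeff hsr hr]
  ring

end IsHarmonic

end Operators

/-- On the `s`-isotypic block, the Fourier transform acts with matrix entries `k_s^{r,r0}`:
`Λ̃_s^{r0,s} ∘ F^{r→r0} ∘ Λ̃_s^{s,r} = k_s^{r,r0} Λ̃_s^{s,s}`. -/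
theorem stmt_19 {Ω : Type*} [Fintype Ω] [DecidableEq Ω] (n r r0 s : ℕ)
    (hn : Fintype.card Ω = n) (hs : 2 * s ≤ n)
    (hr1 : s ≤ r) (hr2 : r ≤ n - s) (hr01 : s ≤ r0) (hr02 : r0 ≤ n - s)
    (ψ : {x : Finset Ω // x.card = s} → ℂ) :
    LamT Ω n r0 s s (Fblock Ω r r0 (LamT Ω n s r s ψ)) =
      kCoef n r r0 s • LamT Ω n s s s ψ := by
  subst hn
  have harmonic := isHarmonic_harmonicPart hs ψ
  rw [LamT_eq_smul_sumSubsets hr1, Fblock_smul, LamT_smul,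
    harmonic.Fblock_sumSubsets hr1 hr01 hr02, LamT_smul, harmonic.LamT_sumSubsets hr01 (by omega),
    smul_smul, smul_smul, ← kCoef_eq, LamT_self]
end
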